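/- Let R ≥ 1, and for each i = 1,…,R let U_i ∈ ℂ^{N_i×K_i}, F_i(A) the frame potential of the rows of U_i indexed by A ⊆ {1,…,N_i}, and F(L) = ∏_{i=1}^R F_i(L_i) for a tuple of selections L = (L_1,…,L_R). Let K = ∏_{i=1}^R K_i, let u_m for m ∈ ∏_i {1,…,N_i} denote the rows of the Kronecker product U_1 ⊗ ⋯ ⊗ U_R, and let L_min = min_m ‖u_m‖₂², assumed strictly positive. Suppose L^g = (L_1^g,…,L_R^g) and L^⋆ = (L_1^⋆,…,L_R^⋆) are two tuples of selections with every L_i^g and every L_i^⋆ nonempty, satisfying the guarantee F(𝒩) − F(L^g) ≥ (1/2)(F(𝒩) − F(L^⋆)), where F(𝒩) = ∏_{i=1}^R F_i({1,…,N_i}). Then F(L^g) ≤ γ F(L^⋆) with γ = (1/2)((K/L_min²) F(𝒩) + 1). -/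

import Mathlib

open scoped BigOperators

/-- Per-domain frame potential set function:
`F_i(A) = ∑_{j∈A} ∑_{l∈A} |⟨u_{i,j}, u_{i,l}⟩|²`. -/
noncomputable def frameSetFun {n k : ℕ} (U : Matrix (Fin n) (Fin k) ℂ)
    (A : Finset (Fin n)) : ℝ :=
  ∑ j ∈ A, ∑ l ∈ A, ‖∑ c, star (U j c) * U l c‖ ^ 2

/-!
Every selected row `u_m` of the Kronecker product contributes the diagonal term `‖u_m‖⁴` to the
frame potential, so `F(L^⋆) ≥ ℓ²` for any lower bound `ℓ` of the squared norms `‖u_m‖²`, and hence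
`F(𝒩) ≤ (F(𝒩) / ℓ²) F(L^⋆)`. A guarantee `F(𝒩) - F(L^g) ≥ α (F(𝒩) - F(L^⋆))` with `α ≤ 1` says
`F(L^g) ≤ (1 - α) F(𝒩) + α F(L^⋆)`, and bounding `F(𝒩)` on the right makes it multiplicative.
For `α = 1/2` this is the claim without the factor `K ≥ 1`.
-/

theorem norm_sum_star_mul_self {κ 𝕜 : Type*} [Fintype κ] [RCLike 𝕜] (v : κ → 𝕜) :
    ‖∑ c, star (v c) * v c‖ = ∑ c, ‖v c‖ ^ 2 := by
  have hreal : ∑ c, star (v c) * v c = ((∑ c, ‖v c‖ ^ 2 : ℝ) : 𝕜) := by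
    push_cast
    exact Finset.sum_congr rfl fun c _ => RCLike.conj_mul (v c)
  rw [hreal, RCLike.norm_of_nonneg (Finset.sum_nonneg fun c _ => sq_nonneg _)]

section FramePotential

variable {n k : ℕ} (U : Matrix (Fin n) (Fin k) ℂ)

theorem frameSetFun_nonneg (A : Finset (Fin n)) : 0 ≤ frameSetFun U A :=
  Finset.sum_nonneg fun _ _ => Finset.sum_nonneg fun _ _ => sq_nonneg _

theorem frameSetFun_mono : Monotone (frameSetFun U) := fun A B hAB => by
  simp only [frameSetFun, ← Finset.sum_product']
  exact Finset.sum_le_sum_of_subset_of_nonneg (Finset.product_subset_product hAB hAB)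
    fun _ _ _ => sq_nonneg _

theorem frameSetFun_singleton (j : Fin n) :
    frameSetFun U {j} = (∑ c, ‖U j c‖ ^ 2) ^ 2 := by
  rw [frameSetFun, Finset.sum_singleton, Finset.sum_singleton, norm_sum_star_mul_self]

end FramePotential

section KroneckerRow

variable {ι 𝕜 : Type*} [Fintype ι] [DecidableEq ι] [NormedField 𝕜] {ν κ : ι → Type*}
  [∀ i, Fintype (κ i)] (U : ∀ i, Matrix (ν i) (κ i) 𝕜) (m : ∀ i, ν i)

/-- The squared Euclidean norm `‖u_m‖²` of the row with multi-index `m` of the Kronecker product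
of the matrices `U i`, whose columns are indexed by the dependent functions `k : ∀ i, κ i`. -/
noncomputable def kroneckerRowNormSq : ℝ :=
  ∑ k : ∀ i, κ i, ‖∏ i, U i (m i) (k i)‖ ^ 2

theorem kroneckerRowNormSq_eq_prod :
    kroneckerRowNormSq U m = ∏ i, ∑ c, ‖U i (m i) c‖ ^ 2 := by
  simp only [kroneckerRowNormSq, norm_prod, ← Finset.prod_pow, Fintype.prod_sum]

theorem one_le_prod_card_of_kroneckerRowNormSq_pos (hm : 0 < kroneckerRowNormSq U m) :
    1 ≤ ∏ i, Fintype.card (κ i) := by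
  obtain ⟨k, -, -⟩ := Finset.exists_ne_zero_of_sum_ne_zero hm.ne'
  exact Finset.one_le_prod' fun i _ => Fintype.card_pos_iff.2 ⟨k i⟩

end KroneckerRow

section ProductSelection

variable {ι : Type*} [Fintype ι] {N K : ι → ℕ} (U : ∀ i, Matrix (Fin (N i)) (Fin (K i)) ℂ)

theorem prod_frameSetFun_nonneg (L : ∀ i, Finset (Fin (N i))) :
    0 ≤ ∏ i, frameSetFun (U i) (L i) :=
  Finset.prod_nonneg fun i _ => frameSetFun_nonneg (U i) (L i)

theorem kroneckerRowNormSq_sq_le_prod_frameSetFun [DecidableEq ι]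
    {L : ∀ i, Finset (Fin (N i))} {m : ∀ i, Fin (N i)} (hm : ∀ i, m i ∈ L i) :
    kroneckerRowNormSq U m ^ 2 ≤ ∏ i, frameSetFun (U i) (L i) :=
  calc kroneckerRowNormSq U m ^ 2
      = ∏ i, frameSetFun (U i) {m i} := by
        simp only [kroneckerRowNormSq_eq_prod, frameSetFun_singleton, Finset.prod_pow]
    _ ≤ ∏ i, frameSetFun (U i) (L i) :=
        Finset.prod_le_prod (fun i _ => frameSetFun_nonneg (U i) _) fun i _ =>
          frameSetFun_mono (U i) (Finset.singleton_subset_iff.2 (hm i))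

theorem frame_potential_near_optimality_dense_general [DecidableEq ι]
    (Lg Lstar : ∀ i, Finset (Fin (N i))) (hstar : ∀ i, (Lstar i).Nonempty)
    {ℓ α : ℝ} (hℓ : 0 < ℓ) (hα : α ≤ 1)
    (hrow : ∀ m : ∀ i, Fin (N i), (∀ i, m i ∈ Lstar i) → ℓ ≤ kroneckerRowNormSq U m)
    (hguarantee :
      α * ((∏ i, frameSetFun (U i) Finset.univ) - ∏ i, frameSetFun (U i) (Lstar i)) ≤
        (∏ i, frameSetFun (U i) Finset.univ) - ∏ i, frameSetFun (U i) (Lg i)) :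
    ∏ i, frameSetFun (U i) (Lg i) ≤
      ((1 - α) * ((∏ i, frameSetFun (U i) Finset.univ) / ℓ ^ 2) + α) *
        ∏ i, frameSetFun (U i) (Lstar i) := by
  choose m hm using hstar
  have hT := prod_frameSetFun_nonneg U fun _ => Finset.univ
  set T := ∏ i, frameSetFun (U i) Finset.univ
  set S := ∏ i, frameSetFun (U i) (Lstar i)
  have hS : ℓ ^ 2 ≤ S := (pow_le_pow_left₀ hℓ.le (hrow m hm) 2).trans
    (kroneckerRowNormSq_sq_le_prod_frameSetFun U hm)
  have hTS : T ≤ T / ℓ ^ 2 * S := by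
    rw [div_mul_eq_mul_div, le_div_iff₀ (pow_pos hℓ 2)]
    exact mul_le_mul_of_nonneg_left hS hT
  calc ∏ i, frameSetFun (U i) (Lg i)
      ≤ (1 - α) * T + α * S := by linarith
    _ ≤ (1 - α) * (T / ℓ ^ 2 * S) + α * S := by gcongr
    _ = ((1 - α) * (T / ℓ ^ 2) + α) * S := by ring

end ProductSelection

/-- Near-optimality with respect to the frame potential (dense core case):
if the tuples of nonempty selections `L^g` and `L^⋆` satisfy the near-optimality
guarantee `F(𝒩) − F(L^g) ≥ (1/2)(F(𝒩) − F(L^⋆))`, then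
`F(L^g) ≤ γ F(L^⋆)` with `γ = (1/2)((K/L_min²) F(𝒩) + 1)`, where
`K = ∏ i K_i` and `L_min` is the minimum squared row norm of the Kronecker
product `U_1 ⊗ ⋯ ⊗ U_R`. -/
theorem frame_potential_near_optimality_dense (R : ℕ) (hR : 1 ≤ R)
    (N K : Fin R → ℕ)
    (U : ∀ i, Matrix (Fin (N i)) (Fin (K i)) ℂ)
    (Lg Lstar : ∀ i, Finset (Fin (N i)))
    (hg : ∀ i, (Lg i).Nonempty) (hstar : ∀ i, (Lstar i).Nonempty)
    (Lmin : ℝ) (hpos : 0 < Lmin)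
    (hLmin : IsLeast {x : ℝ | ∃ m : ∀ i, Fin (N i),
      x = ∑ k : ∀ i, Fin (K i), ‖∏ i, U i (m i) (k i)‖ ^ 2} Lmin)
    (hguarantee :
      (∏ i, frameSetFun (U i) Finset.univ) - (∏ i, frameSetFun (U i) (Lg i)) ≥
        (1 / 2) * ((∏ i, frameSetFun (U i) Finset.univ) -
          ∏ i, frameSetFun (U i) (Lstar i))) :
    (∏ i, frameSetFun (U i) (Lg i)) ≤
      (1 / 2) * (((∏ i, (K i : ℝ)) / Lmin ^ 2) *
          (∏ i, frameSetFun (U i) Finset.univ) + 1) *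
        ∏ i, frameSetFun (U i) (Lstar i) := by
  obtain ⟨m, hm⟩ := hLmin.1
  have hK : 1 ≤ ∏ i, K i := by
    simpa only [Fintype.card_fin] using
      one_le_prod_card_of_kroneckerRowNormSq_pos U m (hpos.trans_eq hm)
  have hKT := le_mul_of_one_le_left
    (div_nonneg (prod_frameSetFun_nonneg U fun _ => Finset.univ) (sq_nonneg Lmin))
    (show (1 : ℝ) ≤ ∏ i, (K i : ℝ) by exact_mod_cast hK)
  refine (frame_potential_near_optimality_dense_general U Lg Lstar hstar hpos one_half_lt_one.le
    (fun m _ => hLmin.2 ⟨m, rfl⟩) hguarantee).trans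
    (mul_le_mul_of_nonneg_right ?_ (prod_frameSetFun_nonneg U Lstar))
  linear_combination (1 / 2) * hKT
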